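/- Let φ(x) be a formula of the correspondence language with at most the free variable x. Then φ(x) is logically equivalent to the (2,1)-standard x-translation ST_21(I,x) of some modal intuitionistic formula I if and only if φ(x) is invariant with respect to (2,1)-modal asimulations. -/

import Mathlib

namespace ModalIntAsim

/-- Binary relation symbols of the correspondence vocabulary: R, R_□, R_◇. -/
inductive RelSym : Type
  | r | box | diam
deriving DecidableEq

/-- Formulas of the correspondence language: classical first-order logic without
identity, with variables indexed by `ℕ`, unary predicate letters `P n` (n : ℕ),
and the three binary relation symbols. -/
inductive FOForm : Type
  | falsum : FOForm
  | pred : ℕ → ℕ → FOForm            -- `pred n v` is `P_n(x_v)`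
  | rel : RelSym → ℕ → ℕ → FOForm    -- `rel s v w` is `S(x_v, x_w)`
  | conj : FOForm → FOForm → FOForm
  | disj : FOForm → FOForm → FOForm
  | impl : FOForm → FOForm → FOForm
  | all : ℕ → FOForm → FOForm
  | ex : ℕ → FOForm → FOForm

namespace FOForm

/-- Free variables of a correspondence formula. -/
def freeVars : FOForm → Finset ℕ
  | falsum => ∅
  | pred _ v => {v}
  | rel _ v w => {v, w}
  | conj f g => f.freeVars ∪ g.freeVars
  | disj f g => f.freeVars ∪ g.freeVars
  | impl f g => f.freeVars ∪ g.freeVars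
  | all v f => f.freeVars \ {v}
  | ex v f => f.freeVars \ {v}

/-- The unary predicate letters occurring in a formula (the binary relation
symbols R, R_□, R_◇ are regarded as belonging to every vocabulary Σ_φ). -/
def predLetters : FOForm → Finset ℕ
  | falsum => ∅
  | pred n _ => {n}
  | rel _ _ _ => ∅
  | conj f g => f.predLetters ∪ g.predLetters
  | disj f g => f.predLetters ∪ g.predLetters
  | impl f g => f.predLetters ∪ g.predLetters
  | all _ f => f.predLetters
  | ex _ f => f.predLetters

/-- Degree of a formula: the greatest number of nested quantifiers. -/
def degree : FOForm → ℕ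
  | falsum => 0
  | pred _ _ => 0
  | rel _ _ _ => 0
  | conj f g => max f.degree g.degree
  | disj f g => max f.degree g.degree
  | impl f g => max f.degree g.degree
  | all _ f => f.degree + 1
  | ex _ f => f.degree + 1

end FOForm

/-- A model of the correspondence language: a domain together with
interpretations of R, R_□, R_◇ and of the unary predicate letters.
(A Θ-model only consults the letters in Θ.) -/
structure Model : Type 1 where
  U : Type
  rel : U → U → Prop
  relBox : U → U → Prop
  relDiam : U → U → Prop
  pred : ℕ → U → Prop

/-- Interpretation of a binary relation symbol in a model. -/
def Model.relOf (M : Model) : RelSym → M.U → M.U → Prop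
  | .r => M.rel
  | .box => M.relBox
  | .diam => M.relDiam

/-- Tarskian satisfaction of a formula in a model under an assignment. -/
def Sat (M : Model) : FOForm → (ℕ → M.U) → Prop
  | .falsum, _ => False
  | .pred n v, α => M.pred n (α v)
  | .rel s v w, α => M.relOf s (α v) (α w)
  | .conj f g, α => Sat M f α ∧ Sat M g α
  | .disj f g, α => Sat M f α ∨ Sat M g α
  | .impl f g, α => Sat M f α → Sat M g α
  | .all v f, α => ∀ u : M.U, Sat M f (Function.update α v u)
  | .ex v f, α => ∃ u : M.U, Sat M f (Function.update α v u)

/-- `M, a ⊨ φ(x)`: φ is true in `M` under any assignment sending `x` to `a`. -/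
def SatAt (M : Model) (a : M.U) (x : ℕ) (φ : FOForm) : Prop :=
  ∀ α : ℕ → M.U, α x = a → Sat M φ α

/-- Logical equivalence of correspondence formulas. -/
def Equiv (φ ψ : FOForm) : Prop :=
  ∀ (M : Model) (α : ℕ → M.U), Sat M φ α ↔ Sat M ψ α

/-- Logical entailment between correspondence formulas. -/
def Entails (φ ψ : FOForm) : Prop :=
  ∀ (M : Model) (α : ℕ → M.U), Sat M φ α → Sat M ψ α

/-- Modal intuitionistic formulas: built from propositional letters `p n`
using ⊥, ∧, ∨, →, □, ◇. -/
inductive MForm : Type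
  | bot : MForm
  | prop : ℕ → MForm
  | conj : MForm → MForm → MForm
  | disj : MForm → MForm → MForm
  | impl : MForm → MForm → MForm
  | box : MForm → MForm
  | diam : MForm → MForm

/-- The (i,j)-standard x-translation `ST_ij`.  `boxOne = true` means the box
clause (□₁) is used (i = 1), `boxOne = false` means (□₂) (i = 2); likewise
`diamOne = true` means the diamond clause (◇₁) (j = 1) and `diamOne = false`
means (◇₂) (j = 2).  Bound variables are chosen fresh as `x+1`, `x+2`. -/
def ST (boxOne diamOne : Bool) : MForm → ℕ → FOForm
  | .bot, _ => .falsum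
  | .prop n, x => .pred n x
  | .conj I J, x => .conj (ST boxOne diamOne I x) (ST boxOne diamOne J x)
  | .disj I J, x => .disj (ST boxOne diamOne I x) (ST boxOne diamOne J x)
  | .impl I J, x =>
      .all (x + 1) (.impl (.rel .r x (x + 1))
        (.impl (ST boxOne diamOne I (x + 1)) (ST boxOne diamOne J (x + 1))))
  | .box I, x =>
      if boxOne then
        .all (x + 1) (.impl (.rel .box x (x + 1)) (ST boxOne diamOne I (x + 1)))
      else
        .all (x + 1) (.impl (.rel .r x (x + 1))
          (.all (x + 2) (.impl (.rel .box (x + 1) (x + 2)) (ST boxOne diamOne I (x + 2)))))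
  | .diam I, x =>
      if diamOne then
        .ex (x + 1) (.conj (.rel .diam x (x + 1)) (ST boxOne diamOne I (x + 1)))
      else
        .all (x + 1) (.impl (.rel .r x (x + 1))
          (.ex (x + 2) (.conj (.rel .diam (x + 1) (x + 2)) (ST boxOne diamOne I (x + 2)))))

/-! ### Conditions on relations between tuples (the k-asimulation conditions).
A relation between the two models is represented by its two directed
components; `N` is the model of the source tuple and `P` that of the target
tuple.  A tuple `(ā_m, a)` is represented as the list `as ++ [a]`, with
`m = as.length`. -/

section TupleConds

variable (N P : Model)

/-- The "p-type" condition: related tuples are nonempty and of equal length. -/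
def TypeCond (A : List N.U → List P.U → Prop) : Prop :=
  ∀ as bs, A as bs → as ≠ [] ∧ as.length = bs.length

/-- (p-base). -/
def BaseCond (Θ : Set ℕ) (A : List N.U → List P.U → Prop) : Prop :=
  ∀ (as : List N.U) (bs : List P.U) (a : N.U) (b : P.U),
    A (as ++ [a]) (bs ++ [b]) → ∀ n ∈ Θ, N.pred n a → P.pred n b

/-- (p-step). -/
def StepCond (k : ℕ) (A : List N.U → List P.U → Prop)
    (Arev : List P.U → List N.U → Prop) : Prop :=
  ∀ (as : List N.U) (bs : List P.U) (a : N.U) (b d : P.U),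
    A (as ++ [a]) (bs ++ [b]) → P.rel b d → as.length < k →
    ∃ c : N.U, N.rel a c ∧ A (as ++ [a, c]) (bs ++ [b, d]) ∧
      Arev (bs ++ [b, d]) (as ++ [a, c])

/-- (p-box-1). -/
def Box1Cond (k : ℕ) (A : List N.U → List P.U → Prop) : Prop :=
  ∀ (as : List N.U) (bs : List P.U) (a : N.U) (b d : P.U),
    A (as ++ [a]) (bs ++ [b]) → P.relBox b d → as.length < k →
    ∃ c : N.U, N.relBox a c ∧ A (as ++ [a, c]) (bs ++ [b, d])

/-- (p-box-2). -/
def Box2Cond (k : ℕ) (A : List N.U → List P.U → Prop) : Prop :=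
  ∀ (as : List N.U) (bs : List P.U) (a : N.U) (b d f : P.U),
    A (as ++ [a]) (bs ++ [b]) → P.rel b d → P.relBox d f → as.length + 1 < k →
    ∃ c e : N.U, N.rel a c ∧ N.relBox c e ∧ A (as ++ [a, c, e]) (bs ++ [b, d, f])

/-- (p-diam-1). -/
def Diam1Cond (k : ℕ) (A : List N.U → List P.U → Prop) : Prop :=
  ∀ (as : List N.U) (bs : List P.U) (a c : N.U) (b : P.U),
    A (as ++ [a]) (bs ++ [b]) → N.relDiam a c → as.length < k →
    ∃ d : P.U, P.relDiam b d ∧ A (as ++ [a, c]) (bs ++ [b, d])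

/-- (p-diam-2(1)). -/
def Diam2aCond (k : ℕ) (A B : List N.U → List P.U → Prop) : Prop :=
  ∀ (as : List N.U) (bs : List P.U) (a : N.U) (b d : P.U),
    A (as ++ [a]) (bs ++ [b]) → P.rel b d → as.length + 1 < k →
    ∃ c : N.U, N.rel a c ∧ B (as ++ [a, c]) (bs ++ [b, d])

/-- (p-diam-2(2)). -/
def Diam2bCond (k : ℕ) (B A : List N.U → List P.U → Prop) : Prop :=
  ∀ (as : List N.U) (bs : List P.U) (a c : N.U) (b : P.U),
    B (as ++ [a]) (bs ++ [b]) → N.relDiam a c → as.length < k →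
    ∃ d : P.U, P.relDiam b d ∧ A (as ++ [a, c]) (bs ++ [b, d])

end TupleConds

/-- An (i,1)-modal ⟨(M₁,t),(M₂,u)⟩_k-asimulation (j = 1): a single relation `A`
given by its two directed components `A12`, `A21`. -/
def IsKAsimD1 (boxOne : Bool) (Θ : Set ℕ) (M₁ M₂ : Model) (t : M₁.U) (u : M₂.U) (k : ℕ)
    (A12 : List M₁.U → List M₂.U → Prop) (A21 : List M₂.U → List M₁.U → Prop) : Prop :=
  TypeCond M₁ M₂ A12 ∧ TypeCond M₂ M₁ A21 ∧
  A12 [t] [u] ∧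
  BaseCond M₁ M₂ Θ A12 ∧ BaseCond M₂ M₁ Θ A21 ∧
  StepCond M₁ M₂ k A12 A21 ∧ StepCond M₂ M₁ k A21 A12 ∧
  (if boxOne then Box1Cond M₁ M₂ k A12 ∧ Box1Cond M₂ M₁ k A21
   else Box2Cond M₁ M₂ k A12 ∧ Box2Cond M₂ M₁ k A21) ∧
  Diam1Cond M₁ M₂ k A12 ∧ Diam1Cond M₂ M₁ k A21

/-- An (i,2)-modal ⟨(M₁,t),(M₂,u)⟩_k-asimulation (j = 2): an ordered pair
(A, B) of relations, each given by its two directed components. -/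
def IsKAsimD2 (boxOne : Bool) (Θ : Set ℕ) (M₁ M₂ : Model) (t : M₁.U) (u : M₂.U) (k : ℕ)
    (A12 : List M₁.U → List M₂.U → Prop) (A21 : List M₂.U → List M₁.U → Prop)
    (B12 : List M₁.U → List M₂.U → Prop) (B21 : List M₂.U → List M₁.U → Prop) : Prop :=
  TypeCond M₁ M₂ A12 ∧ TypeCond M₂ M₁ A21 ∧
  TypeCond M₁ M₂ B12 ∧ TypeCond M₂ M₁ B21 ∧
  A12 [t] [u] ∧
  BaseCond M₁ M₂ Θ A12 ∧ BaseCond M₂ M₁ Θ A21 ∧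
  StepCond M₁ M₂ k A12 A21 ∧ StepCond M₂ M₁ k A21 A12 ∧
  (if boxOne then Box1Cond M₁ M₂ k A12 ∧ Box1Cond M₂ M₁ k A21
   else Box2Cond M₁ M₂ k A12 ∧ Box2Cond M₂ M₁ k A21) ∧
  Diam2aCond M₁ M₂ k A12 B12 ∧ Diam2aCond M₂ M₁ k A21 B21 ∧
  Diam2bCond M₁ M₂ k B12 A12 ∧ Diam2bCond M₂ M₁ k B21 A21

/-- φ(x) is invariant with respect to (i,1)-modal k-asimulations. -/
def KInvariantD1 (boxOne : Bool) (x : ℕ) (φ : FOForm) (k : ℕ) : Prop :=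
  ∀ Θ : Set ℕ, (φ.predLetters : Set ℕ) ⊆ Θ →
  ∀ (M₁ M₂ : Model) (t : M₁.U) (u : M₂.U)
    (A12 : List M₁.U → List M₂.U → Prop) (A21 : List M₂.U → List M₁.U → Prop),
    IsKAsimD1 boxOne Θ M₁ M₂ t u k A12 A21 →
    ∀ (a : M₁.U) (b : M₂.U), A12 [a] [b] → SatAt M₁ a x φ → SatAt M₂ b x φ

/-- φ(x) is invariant with respect to (i,2)-modal k-asimulations. -/
def KInvariantD2 (boxOne : Bool) (x : ℕ) (φ : FOForm) (k : ℕ) : Prop :=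
  ∀ Θ : Set ℕ, (φ.predLetters : Set ℕ) ⊆ Θ →
  ∀ (M₁ M₂ : Model) (t : M₁.U) (u : M₂.U)
    (A12 : List M₁.U → List M₂.U → Prop) (A21 : List M₂.U → List M₁.U → Prop)
    (B12 : List M₁.U → List M₂.U → Prop) (B21 : List M₂.U → List M₁.U → Prop),
    IsKAsimD2 boxOne Θ M₁ M₂ t u k A12 A21 B12 B21 →
    ∀ (a : M₁.U) (b : M₂.U), A12 [a] [b] → SatAt M₁ a x φ → SatAt M₂ b x φ

/-! ### Conditions for asimulations *simpliciter* (relations between elements). -/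

section ElemConds

variable (N P : Model)

/-- (base). -/
def BaseCondE (Θ : Set ℕ) (A : N.U → P.U → Prop) : Prop :=
  ∀ (a : N.U) (b : P.U), A a b → ∀ n ∈ Θ, N.pred n a → P.pred n b

/-- (step). -/
def StepCondE (A : N.U → P.U → Prop) (Arev : P.U → N.U → Prop) : Prop :=
  ∀ (a : N.U) (b d : P.U), A a b → P.rel b d →
    ∃ c : N.U, N.rel a c ∧ A c d ∧ Arev d c

/-- (box-1). -/
def Box1CondE (A : N.U → P.U → Prop) : Prop :=
  ∀ (a : N.U) (b d : P.U), A a b → P.relBox b d →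
    ∃ c : N.U, N.relBox a c ∧ A c d

/-- (box-2). -/
def Box2CondE (A : N.U → P.U → Prop) : Prop :=
  ∀ (a : N.U) (b d f : P.U), A a b → P.rel b d → P.relBox d f →
    ∃ c e : N.U, N.rel a c ∧ N.relBox c e ∧ A e f

/-- (diam-1). -/
def Diam1CondE (A : N.U → P.U → Prop) : Prop :=
  ∀ (a c : N.U) (b : P.U), A a b → N.relDiam a c →
    ∃ d : P.U, P.relDiam b d ∧ A c d

/-- (diam-2(1)). -/
def Diam2aCondE (A B : N.U → P.U → Prop) : Prop :=
  ∀ (a : N.U) (b d : P.U), A a b → P.rel b d →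
    ∃ c : N.U, N.rel a c ∧ B c d

/-- (diam-2(2)). -/
def Diam2bCondE (B A : N.U → P.U → Prop) : Prop :=
  ∀ (a c : N.U) (b : P.U), B a b → N.relDiam a c →
    ∃ d : P.U, P.relDiam b d ∧ A c d

end ElemConds

/-- An (i,1)-modal ⟨(M₁,t),(M₂,u)⟩-asimulation (j = 1). -/
def IsAsimD1 (boxOne : Bool) (Θ : Set ℕ) (M₁ M₂ : Model) (t : M₁.U) (u : M₂.U)
    (A12 : M₁.U → M₂.U → Prop) (A21 : M₂.U → M₁.U → Prop) : Prop :=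
  A12 t u ∧
  BaseCondE M₁ M₂ Θ A12 ∧ BaseCondE M₂ M₁ Θ A21 ∧
  StepCondE M₁ M₂ A12 A21 ∧ StepCondE M₂ M₁ A21 A12 ∧
  (if boxOne then Box1CondE M₁ M₂ A12 ∧ Box1CondE M₂ M₁ A21
   else Box2CondE M₁ M₂ A12 ∧ Box2CondE M₂ M₁ A21) ∧
  Diam1CondE M₁ M₂ A12 ∧ Diam1CondE M₂ M₁ A21

/-- An (i,2)-modal ⟨(M₁,t),(M₂,u)⟩-asimulation (j = 2). -/
def IsAsimD2 (boxOne : Bool) (Θ : Set ℕ) (M₁ M₂ : Model) (t : M₁.U) (u : M₂.U)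
    (A12 : M₁.U → M₂.U → Prop) (A21 : M₂.U → M₁.U → Prop)
    (B12 : M₁.U → M₂.U → Prop) (B21 : M₂.U → M₁.U → Prop) : Prop :=
  A12 t u ∧
  BaseCondE M₁ M₂ Θ A12 ∧ BaseCondE M₂ M₁ Θ A21 ∧
  StepCondE M₁ M₂ A12 A21 ∧ StepCondE M₂ M₁ A21 A12 ∧
  (if boxOne then Box1CondE M₁ M₂ A12 ∧ Box1CondE M₂ M₁ A21
   else Box2CondE M₁ M₂ A12 ∧ Box2CondE M₂ M₁ A21) ∧
  Diam2aCondE M₁ M₂ A12 B12 ∧ Diam2aCondE M₂ M₁ A21 B21 ∧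
  Diam2bCondE M₁ M₂ B12 A12 ∧ Diam2bCondE M₂ M₁ B21 A21

/-- φ(x) is invariant with respect to (i,1)-modal asimulations. -/
def InvariantD1 (boxOne : Bool) (x : ℕ) (φ : FOForm) : Prop :=
  ∀ Θ : Set ℕ, (φ.predLetters : Set ℕ) ⊆ Θ →
  ∀ (M₁ M₂ : Model) (t : M₁.U) (u : M₂.U)
    (A12 : M₁.U → M₂.U → Prop) (A21 : M₂.U → M₁.U → Prop),
    IsAsimD1 boxOne Θ M₁ M₂ t u A12 A21 →
    ∀ (a : M₁.U) (b : M₂.U), A12 a b → SatAt M₁ a x φ → SatAt M₂ b x φ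

/-- φ(x) is invariant with respect to (i,2)-modal asimulations. -/
def InvariantD2 (boxOne : Bool) (x : ℕ) (φ : FOForm) : Prop :=
  ∀ Θ : Set ℕ, (φ.predLetters : Set ℕ) ⊆ Θ →
  ∀ (M₁ M₂ : Model) (t : M₁.U) (u : M₂.U)
    (A12 : M₁.U → M₂.U → Prop) (A21 : M₂.U → M₁.U → Prop)
    (B12 : M₁.U → M₂.U → Prop) (B21 : M₂.U → M₁.U → Prop),
    IsAsimD2 boxOne Θ M₁ M₂ t u A12 A21 B12 B21 →
    ∀ (a : M₁.U) (b : M₂.U), A12 a b → SatAt M₁ a x φ → SatAt M₂ b x φ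

/-! ### Types, complete conjunctions, ω-saturation. -/

/-- `int(φ,x,l)`: the set of (2,2)-standard x-translations of modal
intuitionistic formulas which are (Σ_φ,x,l)-formulas. -/
def intSet (φ : FOForm) (x l : ℕ) : Set FOForm :=
  {ψ | (∃ I : MForm, ψ = ST false false I x) ∧
    ψ.predLetters ⊆ φ.predLetters ∧ ψ.freeVars ⊆ {x} ∧ ψ.degree ≤ l}

/-- `tp_l(φ(x),M,a)`. -/
def tpSet (φ : FOForm) (x l : ℕ) (M : Model) (a : M.U) : Set FOForm :=
  {ψ | ψ ∈ intSet φ x l ∧ SatAt M a x ψ}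

/-- Conjunction of a nonempty list of formulas. -/
def listConj : FOForm → List FOForm → FOForm
  | ψ, [] => ψ
  | ψ, χ :: L => FOForm.conj ψ (listConj χ L)

/-- Ψ(x) is a complete (φ,x,k)-conjunction. -/
def IsCompleteConj (φ : FOForm) (x k : ℕ) (Ψ : FOForm) : Prop :=
  (∃ (ψ₀ : FOForm) (L : List FOForm), ψ₀ ∈ intSet φ x k ∧
    (∀ χ ∈ L, χ ∈ intSet φ x k) ∧ Ψ = listConj ψ₀ L) ∧
  ∃ (M : Model) (a : M.U), SatAt M a x (FOForm.conj Ψ φ) ∧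
    ∀ ψ ∈ tpSet φ x k M a, Entails Ψ ψ

/-- `int_x(Θ)` for the (i,j)-standard translation. -/
def intX (Θ : Set ℕ) (boxOne diamOne : Bool) (x : ℕ) : Set FOForm :=
  {ψ | (∃ I : MForm, ψ = ST boxOne diamOne I x) ∧ (ψ.predLetters : Set ℕ) ⊆ Θ}

/-- `tp_x(M,t)` for the (i,j)-standard translation. -/
def tpX (Θ : Set ℕ) (boxOne diamOne : Bool) (x : ℕ) (M : Model) (t : M.U) : Set FOForm :=
  {ψ | ψ ∈ intX Θ boxOne diamOne x ∧ SatAt M t x ψ}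

/-- `imp_x(M,t) = ⋂ { t̄p_x(M,u) : t R_◇ u }` (for the (2,2)-translation). -/
def impX (Θ : Set ℕ) (x : ℕ) (M : Model) (t : M.U) : Set FOForm :=
  {ψ | ψ ∈ intX Θ false false x ∧ ∀ u : M.U, M.relDiam t u → ¬ SatAt M u x ψ}

/-- ω-saturation: for every finite tuple of parameters (the first `n` values of
an assignment `α`) and every set `Γ` of formulas with finitely many free
variables beyond the parameters, if `Γ` is consistent with the first-order
theory of `[M,ā]` (i.e. satisfiable together with it in some model), then `Γ`
is realized in `[M,ā]`. -/
def OmegaSaturated (M : Model) : Prop :=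
  ∀ (n : ℕ) (α : ℕ → M.U) (Γ : Set FOForm),
    (∃ k : ℕ, ∀ γ ∈ Γ, γ.freeVars ⊆ Finset.range (n + k)) →
    (∃ (N : Model) (β : ℕ → N.U),
      (∀ ψ : FOForm, ψ.freeVars ⊆ Finset.range n → Sat M ψ α → Sat N ψ β) ∧
      ∀ γ ∈ Γ, Sat N γ β) →
    ∃ α' : ℕ → M.U, (∀ i < n, α' i = α i) ∧ ∀ γ ∈ Γ, Sat M γ α'

/-! ### Relativization to a class κ of models. -/

/-- κ(Θ) is first-order axiomatizable for every finite Θ (with R ∈ Θ): for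
every finite set `S` of unary predicate letters there is a set of Θ-sentences
axiomatizing membership in κ. -/
def FinAxiomatizable (κ : Set Model) : Prop :=
  ∀ S : Finset ℕ, ∃ Ax : Set FOForm,
    (∀ ψ ∈ Ax, ψ.freeVars = ∅ ∧ (ψ.predLetters : Set ℕ) ⊆ (S : Set ℕ)) ∧
    ∀ M : Model, M ∈ κ ↔ ∀ ψ ∈ Ax, ∀ α : ℕ → M.U, Sat M ψ α

/-- φ κ-follows from ψ: {ψ, ¬φ} is not κ-satisfiable. -/
def KappaFollows (κ : Set Model) (ψ φ : FOForm) : Prop :=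
  ¬ ∃ M : Model, M ∈ κ ∧ ∃ α : ℕ → M.U, Sat M ψ α ∧ ¬ Sat M φ α

/-- κ-equivalence of formulas. -/
def KappaEquiv (κ : Set Model) (φ ψ : FOForm) : Prop :=
  KappaFollows κ φ ψ ∧ KappaFollows κ ψ φ

/-- φ(x) is κ-invariant with respect to (i,1)-modal asimulations. -/
def KappaInvariantD1 (κ : Set Model) (boxOne : Bool) (x : ℕ) (φ : FOForm) : Prop :=
  ∀ Θ : Set ℕ, (φ.predLetters : Set ℕ) ⊆ Θ →
  ∀ (M₁ M₂ : Model), M₁ ∈ κ → M₂ ∈ κ →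
  ∀ (t : M₁.U) (u : M₂.U)
    (A12 : M₁.U → M₂.U → Prop) (A21 : M₂.U → M₁.U → Prop),
    IsAsimD1 boxOne Θ M₁ M₂ t u A12 A21 →
    ∀ (a : M₁.U) (b : M₂.U), A12 a b → SatAt M₁ a x φ → SatAt M₂ b x φ

/-- φ(x) is κ-invariant with respect to (i,2)-modal asimulations. -/
def KappaInvariantD2 (κ : Set Model) (boxOne : Bool) (x : ℕ) (φ : FOForm) : Prop :=
  ∀ Θ : Set ℕ, (φ.predLetters : Set ℕ) ⊆ Θ →
  ∀ (M₁ M₂ : Model), M₁ ∈ κ → M₂ ∈ κ →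
  ∀ (t : M₁.U) (u : M₂.U)
    (A12 : M₁.U → M₂.U → Prop) (A21 : M₂.U → M₁.U → Prop)
    (B12 : M₁.U → M₂.U → Prop) (B21 : M₂.U → M₁.U → Prop),
    IsAsimD2 boxOne Θ M₁ M₂ t u A12 A21 B12 B21 →
    ∀ (a : M₁.U) (b : M₂.U), A12 a b → SatAt M₁ a x φ → SatAt M₂ b x φ

/-- φ(x) is κ-invariant with respect to (i,j)-modal asimulations
(`diamOne = true` means j = 1). -/
def KappaInvariant (κ : Set Model) (boxOne diamOne : Bool) (x : ℕ) (φ : FOForm) : Prop :=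
  if diamOne then KappaInvariantD1 κ boxOne x φ else KappaInvariantD2 κ boxOne x φ


/-!
Preservation of translations under asimulations is an induction on the modal formula, carried out
in the reducts that forget the letters outside `Θ`.

For the converse, inclusion of modal types is itself an asimulation between modally saturated
models (Hennessy–Milner), and the same diagonal argument shows both that ultraproducts over a
countably incomplete ultrafilter are modally saturated and that every finitely realizable modal
type is realized in such an ultraproduct. So if `φ` is invariant and a point `a` of a modally
saturated model satisfies all modal consequences of `φ`, compactness yields a point of a saturated
model of `φ` whose modal type is included in that of `a`, and invariance transfers `φ` to `a`.
Hence `φ` follows from its modal consequences, and by compactness from finitely many of them.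
-/

section Semantics

/-- The accessibility relation of `□` under the clause selected by `boxOne`: `R_□` for (□₁) and
the composition of `R` with `R_□` for (□₂). It lets both clauses be treated at once. -/
def Model.boxRel (boxOne : Bool) (M : Model) : M.U → M.U → Prop :=
  if boxOne then M.relBox else Relation.Comp M.rel M.relBox

/-- Kripke semantics of modal intuitionistic formulas matching the `(i,1)`-standard translation. -/
def MSat (boxOne : Bool) (M : Model) : MForm → M.U → Prop
  | .bot, _ => False
  | .prop n, a => M.pred n a
  | .conj I J, a => MSat boxOne M I a ∧ MSat boxOne M J a
  | .disj I J, a => MSat boxOne M I a ∨ MSat boxOne M J a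
  | .impl I J, a => ∀ b, M.rel a b → MSat boxOne M I b → MSat boxOne M J b
  | .box I, a => ∀ b, M.boxRel boxOne a b → MSat boxOne M I b
  | .diam I, a => ∃ b, M.relDiam a b ∧ MSat boxOne M I b

theorem sat_ST_iff_mSat {boxOne : Bool} {M : Model} {I : MForm} {x : ℕ} {α : ℕ → M.U} :
    Sat M (ST boxOne true I x) α ↔ MSat boxOne M I (α x) := by
  induction I generalizing x α with
  | bot | prop => rfl
  | conj _ _ ihI ihJ | disj _ _ ihI ihJ => simp only [ST, Sat, MSat, ihI, ihJ]
  | impl _ _ ihI ihJ => simp [ST, Sat, MSat, Model.relOf, ihI, ihJ]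
  | box _ ih =>
    cases boxOne
    · simpa [ST, Sat, MSat, Model.relOf, Model.boxRel, Relation.Comp, ih] using
        ⟨fun h c b hab hbc => h b hab c hbc, fun h b hab c hbc => h c b hab hbc⟩
    · simp [ST, Sat, MSat, Model.relOf, Model.boxRel, ih]
  | diam _ ih => simp [ST, Sat, MSat, Model.relOf, ih]

theorem sat_congr {M : Model} {φ : FOForm} {α β : ℕ → M.U} (h : ∀ v ∈ φ.freeVars, α v = β v) :
    Sat M φ α ↔ Sat M φ β := by
  have update_eq {f : FOForm} {v : ℕ} {α β : ℕ → M.U} (h : ∀ w ∈ f.freeVars \ {v}, α w = β w)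
      (u : M.U) : ∀ w ∈ f.freeVars, Function.update α v u w = Function.update β v u w := by
    intro w hw
    by_cases hwv : w = v
    · simp [hwv]
    · simpa [hwv] using h w (by simp [hw, hwv])
  induction φ generalizing α β with
  | falsum => rfl
  | pred n v => simp [Sat, h v (by simp [FOForm.freeVars])]
  | rel s v w =>
    simp [Sat, h v (by simp [FOForm.freeVars]), h w (by simp [FOForm.freeVars])]
  | conj f g hf hg | disj f g hf hg | impl f g hf hg =>
    simp only [FOForm.freeVars, Finset.forall_mem_union] at h
    simp only [Sat, hf h.1, hg h.2]
  | all v f hf => exact forall_congr' fun u => hf (update_eq h u)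
  | ex v f hf => exact exists_congr fun u => hf (update_eq h u)

theorem satAt_iff_sat {M : Model} {φ : FOForm} {x : ℕ} (hfv : φ.freeVars ⊆ {x})
    (α : ℕ → M.U) : SatAt M (α x) x φ ↔ Sat M φ α := by
  refine ⟨fun h => h α rfl, fun h β hβ => (sat_congr fun v hv => ?_).1 h⟩
  rw [Finset.mem_singleton.1 (hfv hv), hβ]

end Semantics

section Preservation

variable {boxOne : Bool} {Θ : Set ℕ} {M N : Model}

/-- The conditions on a `(boxOne,1)`-modal asimulation `(A, A')` between `M` and `N` for the
direction from `M` to `N`; the two box conditions are merged by means of `Model.boxRel`. -/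
structure IsDirectedAsim (boxOne : Bool) (Θ : Set ℕ) (M N : Model)
    (A : M.U → N.U → Prop) (A' : N.U → M.U → Prop) : Prop where
  base : BaseCondE M N Θ A
  step : StepCondE M N A A'
  box : ∀ a b d, A a b → N.boxRel boxOne b d → ∃ c, M.boxRel boxOne a c ∧ A c d
  diam : Diam1CondE M N A

theorem isAsimD1_iff {t : M.U} {u : N.U} {A : M.U → N.U → Prop} {A' : N.U → M.U → Prop} :
    IsAsimD1 boxOne Θ M N t u A A' ↔
      A t u ∧ IsDirectedAsim boxOne Θ M N A A' ∧ IsDirectedAsim boxOne Θ N M A' A := by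
  have box_iff (M N : Model) (A : M.U → N.U → Prop) :
      (∀ a b d, A a b → N.boxRel boxOne b d → ∃ c, M.boxRel boxOne a c ∧ A c d) ↔
        if boxOne then Box1CondE M N A else Box2CondE M N A := by
    cases boxOne
    · constructor
      · intro h a b d f hab hbd hdf
        obtain ⟨e, ⟨c, hac, hce⟩, hef⟩ := h a b f hab ⟨d, hbd, hdf⟩
        exact ⟨c, e, hac, hce, hef⟩
      · rintro h a b f hab ⟨d, hbd, hdf⟩
        obtain ⟨c, e, hac, hce, hef⟩ := h a b d f hab hbd hdf
        exact ⟨e, ⟨c, hac, hce⟩, hef⟩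
    · rfl
  have ite_and_iff (p q r s : Prop) : (if boxOne then p ∧ q else r ∧ s) ↔
      (if boxOne then p else r) ∧ if boxOne then q else s := by cases boxOne <;> rfl
  rw [IsAsimD1, ite_and_iff, ← box_iff, ← box_iff]
  exact ⟨fun ⟨htu, b, b', s, s', ⟨x, x'⟩, d, d'⟩ => ⟨htu, ⟨b, s, x, d⟩, ⟨b', s', x', d'⟩⟩,
    fun ⟨htu, ⟨b, s, x, d⟩, ⟨b', s', x', d'⟩⟩ => ⟨htu, b, b', s, s', ⟨x, x'⟩, d, d'⟩⟩

theorem IsDirectedAsim.mSat {A : M.U → N.U → Prop} {A' : N.U → M.U → Prop}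
    (h : IsDirectedAsim boxOne Set.univ M N A A') (hrev : IsDirectedAsim boxOne Set.univ N M A' A)
    {I : MForm} {a : M.U} {b : N.U} (hab : A a b) (ha : MSat boxOne M I a) :
    MSat boxOne N I b := by
  induction I generalizing M N with
  | bot => exact ha
  | prop n => exact h.base a b hab n trivial ha
  | conj I J ihI ihJ => exact ha.imp (ihI h hrev hab) (ihJ h hrev hab)
  | disj I J ihI ihJ => exact ha.imp (ihI h hrev hab) (ihJ h hrev hab)
  | impl I J ihI ihJ =>
    intro d hbd hd
    obtain ⟨c, hac, hcd, hdc⟩ := h.step a b d hab hbd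
    exact ihJ h hrev hcd (ha c hac (ihI hrev h hdc hd))
  | box I ih =>
    intro d hbd
    obtain ⟨c, hac, hcd⟩ := h.box a b d hab hbd
    exact ih h hrev hcd (ha c hac)
  | diam I ih =>
    obtain ⟨c, hac, hc⟩ := ha
    obtain ⟨d, hbd, hcd⟩ := h.diam a c b hab hac
    exact ⟨d, hbd, ih h hrev hcd hc⟩

/-- The `Θ`-reduct of a model, encoded by making the letters outside `Θ` false everywhere. -/
def Model.restrict (Θ : Set ℕ) (M : Model) : Model :=
  { M with pred := fun n a => n ∈ Θ ∧ M.pred n a }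

theorem sat_restrict_iff {φ : FOForm} (hφ : (φ.predLetters : Set ℕ) ⊆ Θ) {α : ℕ → M.U} :
    Sat (M.restrict Θ) φ α ↔ Sat M φ α := by
  induction φ generalizing α with
  | falsum => rfl
  | pred n v => exact and_iff_right (hφ (Finset.mem_singleton_self n))
  | rel s v w => cases s <;> rfl
  | conj f g hf hg | disj f g hf hg | impl f g hf hg =>
    simp only [FOForm.predLetters, Finset.coe_union, Set.union_subset_iff] at hφ
    simp only [Sat, hf hφ.1, hg hφ.2]
  | all v f hf => exact forall_congr' fun u => hf hφ
  | ex v f hf => exact exists_congr fun u => hf hφ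

theorem IsDirectedAsim.restrict {A : M.U → N.U → Prop} {A' : N.U → M.U → Prop}
    (h : IsDirectedAsim boxOne Θ M N A A') :
    IsDirectedAsim boxOne Set.univ (M.restrict Θ) (N.restrict Θ) A A' where
  base a b hab n _ hn := ⟨hn.1, h.base a b hab n hn.1 hn.2⟩
  step := h.step
  box := h.box
  diam := h.diam

theorem invariantD1_of_equiv_ST {x : ℕ} {φ : FOForm} {I : MForm}
    (hI : Equiv φ (ST boxOne true I x)) : InvariantD1 boxOne x φ := by
  intro Θ hΘ M N t u A A' hA a b hab ha β hβ
  obtain ⟨-, h, h'⟩ := isAsimD1_iff.1 hA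
  have sat_iff (K : Model) (γ : ℕ → K.U) :
      Sat K φ γ ↔ MSat boxOne (K.restrict Θ) I (γ x) := by
    exact (sat_restrict_iff hΘ).symm.trans ((hI (K.restrict Θ) γ).trans sat_ST_iff_mSat)
  rw [sat_iff, hβ]
  exact h.restrict.mSat h'.restrict hab ((sat_iff M fun _ => a).1 (ha _ rfl))

end Preservation

section Saturation

variable {boxOne : Bool}

/-- The point `a` of `M` satisfies all formulas of `Γ` and refutes all formulas of `Δ`. -/
def Realizes (boxOne : Bool) (M : Model) (a : M.U) (Γ Δ : Set MForm) : Prop :=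
  (∀ I ∈ Γ, MSat boxOne M I a) ∧ ∀ I ∈ Δ, ¬ MSat boxOne M I a

theorem realizes_of_forall_inter_singleton {M : Model} {a : M.U} {Γ Δ : Set MForm}
    (h : ∀ I, Realizes boxOne M a (Γ ∩ {I}) (Δ ∩ {I})) : Realizes boxOne M a Γ Δ :=
  ⟨fun I hI => (h I).1 I ⟨hI, rfl⟩, fun I hI => (h I).2 I ⟨hI, rfl⟩⟩

theorem Realizes.inter_singleton {M : Model} {a : M.U} {Γ Δ : Set MForm} {s : Finset MForm}
    (h : Realizes boxOne M a (Γ ∩ s) (Δ ∩ s)) {I : MForm} (hI : I ∈ s) :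
    Realizes boxOne M a (Γ ∩ {I}) (Δ ∩ {I}) := by
  have hs : ({I} : Set MForm) ⊆ s := Set.singleton_subset_iff.2 hI
  exact ⟨fun J hJ => h.1 J ⟨hJ.1, hs hJ.2⟩, fun J hJ => h.2 J ⟨hJ.1, hs hJ.2⟩⟩

/-- Modal saturation along one relation `S`: a pair of sets of formulas that is finitely
realizable among the `S`-successors of a point is realizable there. -/
def SaturatedAlong (boxOne : Bool) (M : Model) (S : M.U → M.U → Prop) : Prop :=
  ∀ (a : M.U) (Γ Δ : Set MForm),
    (∀ s : Finset MForm, ∃ c, S a c ∧ Realizes boxOne M c (Γ ∩ s) (Δ ∩ s)) →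
    ∃ c, S a c ∧ Realizes boxOne M c Γ Δ

/-- Modal saturation: the fragment of `ω`-saturation needed for the Hennessy–Milner argument. -/
structure ModallySaturated (boxOne : Bool) (M : Model) : Prop where
  rel : SaturatedAlong boxOne M M.rel
  box : SaturatedAlong boxOne M (M.boxRel boxOne)
  diam : SaturatedAlong boxOne M M.relDiam

/-- Inclusion of the modal type of `a` in the modal type of `b`. -/
def TypeLE (boxOne : Bool) (M N : Model) (a : M.U) (b : N.U) : Prop :=
  ∀ I, MSat boxOne M I a → MSat boxOne N I b

theorem exists_mSat_iff_forall_mem {T : Set MForm} (hT : T.Finite) :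
    ∃ I, ∀ (M : Model) (a : M.U), MSat boxOne M I a ↔ ∀ J ∈ T, MSat boxOne M J a := by
  induction T, hT using Set.Finite.induction_on with
  | empty => exact ⟨.impl .bot .bot, fun M a => by simp [MSat]⟩
  | @insert J T _ _ ih =>
    obtain ⟨I, hI⟩ := ih
    exact ⟨.conj J I, fun M a => by simp [MSat, hI]⟩

theorem exists_mSat_iff_exists_mem {T : Set MForm} (hT : T.Finite) :
    ∃ I, ∀ (M : Model) (a : M.U), MSat boxOne M I a ↔ ∃ J ∈ T, MSat boxOne M J a := by
  induction T, hT using Set.Finite.induction_on with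
  | empty => exact ⟨.bot, fun M a => by simp [MSat]⟩
  | @insert J T _ _ ih =>
    obtain ⟨I, hI⟩ := ih
    exact ⟨.disj J I, fun M a => by simp [MSat, hI]⟩

variable {M N : Model}

theorem SaturatedAlong.stepCondE_typeLE (hM : SaturatedAlong boxOne M M.rel) :
    StepCondE M N (TypeLE boxOne M N) (TypeLE boxOne N M) := by
  intro a b d hab hbd
  obtain ⟨c, hac, hΓ, hΔ⟩ := hM a {I | MSat boxOne N I d} {I | ¬ MSat boxOne N I d} fun s => by
    obtain ⟨I, hI⟩ := exists_mSat_iff_forall_mem (boxOne := boxOne)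
      (s.finite_toSet.inter_of_right {I | MSat boxOne N I d})
    obtain ⟨J, hJ⟩ := exists_mSat_iff_exists_mem (boxOne := boxOne)
      (s.finite_toSet.inter_of_right {I | ¬ MSat boxOne N I d})
    have impl_false : ¬ MSat boxOne M (.impl I J) a := fun ha => by
      obtain ⟨K, hK, hdK⟩ := (hJ N d).1 (hab _ ha d hbd ((hI N d).2 fun K hK => hK.1))
      exact hK.1 hdK
    simp only [MSat, not_forall, hI, hJ] at impl_false
    obtain ⟨c, hac, hcI, hcJ⟩ := impl_false
    exact ⟨c, hac, hcI, fun K hK hcK => hcJ ⟨K, hK, hcK⟩⟩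
  exact ⟨c, hac, fun I hc => not_not.1 fun hd => hΔ I hd hc, hΓ⟩

theorem SaturatedAlong.exists_boxRel_typeLE (hM : SaturatedAlong boxOne M (M.boxRel boxOne))
    {a : M.U} {b d : N.U} (hab : TypeLE boxOne M N a b) (hbd : N.boxRel boxOne b d) :
    ∃ c, M.boxRel boxOne a c ∧ TypeLE boxOne M N c d := by
  obtain ⟨c, hac, -, hΔ⟩ := hM a ∅ {I | ¬ MSat boxOne N I d} fun s => by
    obtain ⟨J, hJ⟩ := exists_mSat_iff_exists_mem (boxOne := boxOne)
      (s.finite_toSet.inter_of_right {I | ¬ MSat boxOne N I d})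
    have box_false : ¬ MSat boxOne M (.box J) a := fun ha => by
      obtain ⟨K, hK, hdK⟩ := (hJ N d).1 (hab _ ha d hbd)
      exact hK.1 hdK
    simp only [MSat, not_forall, hJ] at box_false
    obtain ⟨c, hac, hcJ⟩ := box_false
    exact ⟨c, hac, by simp, fun K hK hcK => hcJ ⟨K, hK, hcK⟩⟩
  exact ⟨c, hac, fun I hc => not_not.1 fun hd => hΔ I hd hc⟩

theorem SaturatedAlong.diam1CondE_typeLE (hN : SaturatedAlong boxOne N N.relDiam) :
    Diam1CondE M N (TypeLE boxOne M N) := by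
  intro a c b hab hac
  obtain ⟨d, hbd, hΓ, -⟩ := hN b {I | MSat boxOne M I c} ∅ fun s => by
    obtain ⟨I, hI⟩ := exists_mSat_iff_forall_mem (boxOne := boxOne)
      (s.finite_toSet.inter_of_right {I | MSat boxOne M I c})
    obtain ⟨d, hbd, hd⟩ := hab (.diam I) ⟨c, hac, (hI M c).2 fun K hK => hK.1⟩
    exact ⟨d, hbd, (hI N d).1 hd, by simp⟩
  exact ⟨d, hbd, hΓ⟩

theorem ModallySaturated.isDirectedAsim_typeLE {Θ : Set ℕ} (hM : ModallySaturated boxOne M)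
    (hN : ModallySaturated boxOne N) :
    IsDirectedAsim boxOne Θ M N (TypeLE boxOne M N) (TypeLE boxOne N M) where
  base _ _ hab n _ := hab (.prop n)
  step := hM.rel.stepCondE_typeLE
  box _ _ _ := hM.box.exists_boxRel_typeLE
  diam := hN.diam.diam1CondE_typeLE

end Saturation

section Ultraproduct

open Filter

/-- For each `i`, the witness `x i` meets as long an initial segment of the countably many
requirements as is possible at `i` within the bound `n i`. -/
theorem exists_forall_eventually {ι κ : Type*} [Countable κ] {X : ι → Type*}
    [∀ i, Nonempty (X i)] {l : Filter ι} {n : ι → ℕ} (hn : Tendsto n l atTop)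
    {Q : κ → ∀ i, X i → Prop} (h : ∀ s : Finset κ, ∀ᶠ i in l, ∃ x, ∀ k ∈ s, Q k i x) :
    ∃ x : ∀ i, X i, ∀ k, ∀ᶠ i in l, Q k i (x i) := by
  classical
  obtain ⟨code, code_inj⟩ := exists_injective_nat κ
  let Meets (i : ι) (m : ℕ) : Prop := ∃ x, ∀ k, code k < m → Q k i x
  have meets_zero (i : ι) : Meets i 0 := by simp [Meets]
  have meets_eventually (m : ℕ) : ∀ᶠ i in l, Meets i m := by
    have hfin : {k | code k < m}.Finite := (Set.finite_Iio m).preimage code_inj.injOn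
    simpa using h hfin.toFinset
  choose x hx using fun i => Nat.findGreatest_spec (Nat.zero_le (n i)) (meets_zero i)
  refine ⟨x, fun k => ?_⟩
  filter_upwards [meets_eventually (code k + 1), hn.eventually_ge_atTop (code k + 1)]
    with i hmeets hle
  exact hx i k (Nat.le_findGreatest hle hmeets)

/-- An injective coding of modal formulas by natural numbers: a tag for the outermost constructor
is paired with the code of its arguments. -/
def MForm.code : MForm → ℕ
  | .bot => Nat.pair 0 0
  | .prop n => Nat.pair 1 n
  | .conj I J => Nat.pair 2 (Nat.pair I.code J.code)
  | .disj I J => Nat.pair 3 (Nat.pair I.code J.code)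
  | .impl I J => Nat.pair 4 (Nat.pair I.code J.code)
  | .box I => Nat.pair 5 I.code
  | .diam I => Nat.pair 6 I.code

theorem MForm.code_injective : Function.Injective MForm.code := by
  intro I J h
  induction I generalizing J <;> cases J <;> grind [MForm.code, Nat.pair_eq_pair]

instance : Countable MForm :=
  MForm.code_injective.countable

variable {boxOne : Bool} {ι : Type} {𝒰 : Ultrafilter ι} {M : ι → Model}

/-- The ultraproduct of a family of models. The language has no identity, so the full product
serves as the domain and no quotient is needed. -/
def Model.ultraproduct (𝒰 : Ultrafilter ι) (M : ι → Model) : Model where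
  U := ∀ i, (M i).U
  rel f g := ∀ᶠ i in 𝒰, (M i).rel (f i) (g i)
  relBox f g := ∀ᶠ i in 𝒰, (M i).relBox (f i) (g i)
  relDiam f g := ∀ᶠ i in 𝒰, (M i).relDiam (f i) (g i)
  pred n f := ∀ᶠ i in 𝒰, (M i).pred n (f i)

theorem sat_ultraproduct_iff {φ : FOForm} {α : ℕ → (Model.ultraproduct 𝒰 M).U} :
    Sat (Model.ultraproduct 𝒰 M) φ α ↔ ∀ᶠ i in 𝒰, Sat (M i) φ fun v => α v i := by
  have update_apply (α : ℕ → (Model.ultraproduct 𝒰 M).U) (v : ℕ)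
      (u : (Model.ultraproduct 𝒰 M).U) (i : ι) :
      (fun w => Function.update α v u w i) = Function.update (fun w => α w i) v (u i) := by
    funext w
    rcases eq_or_ne w v with rfl | hwv <;> simp [*]
  have (i : ι) : Nonempty (M i).U := ⟨α 0 i⟩
  induction φ generalizing α with
  | falsum => exact eventually_const.symm
  | pred n v => rfl
  | rel s v w => cases s <;> rfl
  | conj f g hf hg => simp only [Sat, hf, hg, eventually_and]
  | disj f g hf hg => simp only [Sat, hf, hg, Ultrafilter.eventually_or]
  | impl f g hf hg => simp only [Sat, hf, hg, Ultrafilter.eventually_imp]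
  | all v f hf =>
    rw [← not_iff_not, ← Ultrafilter.eventually_not]
    simp only [Sat, hf, update_apply, not_forall, ← Ultrafilter.eventually_not]
    exact (skolem (P := fun i u => ¬ Sat (M i) f (Function.update (fun w => α w i) v u))).symm
  | ex v f hf =>
    simp only [Sat, hf, update_apply]
    exact (skolem (P := fun i u => Sat (M i) f (Function.update (fun w => α w i) v u))).symm

theorem mSat_ultraproduct_iff {I : MForm} {f : (Model.ultraproduct 𝒰 M).U} :
    MSat boxOne (Model.ultraproduct 𝒰 M) I f ↔ ∀ᶠ i in 𝒰, MSat boxOne (M i) I (f i) := by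
  simpa only [sat_ST_iff_mSat] using
    sat_ultraproduct_iff (φ := ST boxOne true I 0) (α := fun _ => f)

theorem realizes_ultraproduct_iff {f : (Model.ultraproduct 𝒰 M).U} {Γ Δ : Set MForm}
    (hΓ : Γ.Finite) (hΔ : Δ.Finite) :
    Realizes boxOne (Model.ultraproduct 𝒰 M) f Γ Δ ↔
      ∀ᶠ i in 𝒰, Realizes boxOne (M i) (f i) Γ Δ := by
  simp only [Realizes, mSat_ultraproduct_iff, ← Ultrafilter.eventually_not, eventually_and,
    eventually_all_finite hΓ, eventually_all_finite hΔ]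

theorem realizes_ultraproduct_of_forall_eventually {f : (Model.ultraproduct 𝒰 M).U}
    {Γ Δ : Set MForm} (h : ∀ I, ∀ᶠ i in 𝒰, Realizes boxOne (M i) (f i) (Γ ∩ {I}) (Δ ∩ {I})) :
    Realizes boxOne (Model.ultraproduct 𝒰 M) f Γ Δ :=
  realizes_of_forall_inter_singleton fun I =>
    (realizes_ultraproduct_iff (Set.toFinite _) (Set.toFinite _)).2 (h I)

theorem boxRel_ultraproduct_iff {f g : (Model.ultraproduct 𝒰 M).U} :
    (Model.ultraproduct 𝒰 M).boxRel boxOne f g ↔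
      ∀ᶠ i in 𝒰, (M i).boxRel boxOne (f i) (g i) := by
  have (i : ι) : Nonempty (M i).U := ⟨f i⟩
  cases boxOne
  · simp only [Model.boxRel, Relation.Comp, Bool.false_eq_true, if_false, skolem, eventually_and]
    rfl
  · rfl

theorem saturatedAlong_ultraproduct {n : ι → ℕ} (hn : Tendsto n 𝒰 atTop)
    (S : ∀ i, (M i).U → (M i).U → Prop) :
    SaturatedAlong boxOne (Model.ultraproduct 𝒰 M)
      fun f g => ∀ᶠ i in 𝒰, S i (f i) (g i) := by
  intro f Γ Δ hfin
  have (i : ι) : Nonempty (M i).U := ⟨f i⟩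
  obtain ⟨g, hg⟩ := exists_forall_eventually hn (X := fun i => (M i).U)
    (Q := fun I i c => S i (f i) c ∧ Realizes boxOne (M i) c (Γ ∩ {I}) (Δ ∩ {I})) fun s => by
      obtain ⟨g, hfg, hs⟩ := hfin s
      filter_upwards [hfg, (realizes_ultraproduct_iff (s.finite_toSet.inter_of_right _)
        (s.finite_toSet.inter_of_right _)).1 hs] with i hi hsi
      exact ⟨g i, fun I hI => ⟨hi, hsi.inter_singleton hI⟩⟩
  exact ⟨g, (hg .bot).mono fun i => And.left,
    realizes_ultraproduct_of_forall_eventually fun I => (hg I).mono fun i => And.right⟩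

theorem modallySaturated_ultraproduct {n : ι → ℕ} (hn : Tendsto n 𝒰 atTop) :
    ModallySaturated boxOne (Model.ultraproduct 𝒰 M) where
  rel := saturatedAlong_ultraproduct hn fun i => (M i).rel
  box := by
    simpa only [← boxRel_ultraproduct_iff] using
      saturatedAlong_ultraproduct hn fun i => (M i).boxRel boxOne
  diam := saturatedAlong_ultraproduct hn fun i => (M i).relDiam

theorem exists_modallySaturated_realizes {x : ℕ} {φ : FOForm} {Γ Δ : Set MForm}
    (hfin : ∀ s : Finset MForm, ∃ (M : Model) (α : ℕ → M.U),
      Sat M φ α ∧ Realizes boxOne M (α x) (Γ ∩ s) (Δ ∩ s)) :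
    ∃ (M : Model) (α : ℕ → M.U),
      ModallySaturated boxOne M ∧ Sat M φ α ∧ Realizes boxOne M (α x) Γ Δ := by
  let 𝒰 : Ultrafilter ℕ := hyperfilter ℕ
  have h𝒰 : Tendsto id (𝒰 : Filter ℕ) atTop := Nat.hyperfilter_le_atTop
  have : Nonempty (Σ M : Model, ℕ → M.U) :=
    let ⟨M, α, _⟩ := hfin ∅
    ⟨⟨M, α⟩⟩
  obtain ⟨P, hP⟩ := exists_forall_eventually h𝒰 (X := fun _ => Σ M : Model, ℕ → M.U)
    (Q := fun I _ P => Sat P.1 φ P.2 ∧ Realizes boxOne P.1 (P.2 x) (Γ ∩ {I}) (Δ ∩ {I}))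
    fun s => by
      obtain ⟨M, α, hφ, hs⟩ := hfin s
      exact .of_forall fun _ => ⟨⟨M, α⟩, fun I hI => ⟨hφ, hs.inter_singleton hI⟩⟩
  exact ⟨.ultraproduct 𝒰 fun i => (P i).1, fun v i => (P i).2 v,
    modallySaturated_ultraproduct h𝒰, sat_ultraproduct_iff.2 ((hP .bot).mono fun i => And.left),
    realizes_ultraproduct_of_forall_eventually fun I => (hP I).mono fun i => And.right⟩

end Ultraproduct

section Characterization

variable {boxOne : Bool} {x : ℕ} {φ : FOForm}

/-- The modal consequences of `φ`: the modal formulas whose translation is entailed by `φ`. -/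
def modalConsequences (boxOne : Bool) (x : ℕ) (φ : FOForm) : Set MForm :=
  {I | Entails φ (ST boxOne true I x)}

theorem mSat_of_mem_modalConsequences {I : MForm} (hI : I ∈ modalConsequences boxOne x φ)
    {M : Model} {α : ℕ → M.U} (hα : Sat M φ α) : MSat boxOne M I (α x) :=
  sat_ST_iff_mSat.1 (hI M α hα)

theorem exists_equiv_ST_of_forall_modallySaturated
    (h : ∀ (M : Model) (α : ℕ → M.U), ModallySaturated boxOne M →
      (∀ I ∈ modalConsequences boxOne x φ, MSat boxOne M I (α x)) → Sat M φ α) :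
    ∃ I, Equiv φ (ST boxOne true I x) := by
  obtain ⟨s, hs⟩ : ∃ s : Finset MForm, ∀ (M : Model) (α : ℕ → M.U),
      (∀ I ∈ modalConsequences boxOne x φ ∩ s, MSat boxOne M I (α x)) → Sat M φ α := by
    by_contra! hfin
    obtain ⟨M, α, hM, hφ, hΓ, -⟩ := exists_modallySaturated_realizes
      (φ := φ.impl .falsum) (Δ := ∅) fun s =>
        let ⟨M, α, hα, hφ⟩ := hfin s
        ⟨M, α, hφ, hα, by simp⟩
    exact hφ (h M α hM hΓ)
  obtain ⟨I, hI⟩ := exists_mSat_iff_forall_mem (boxOne := boxOne)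
    (s.finite_toSet.inter_of_right (modalConsequences boxOne x φ))
  refine ⟨I, fun M α => ?_⟩
  rw [sat_ST_iff_mSat, hI]
  exact ⟨fun hα J hJ => mSat_of_mem_modalConsequences hJ.1 hα, hs M α⟩

theorem exists_modallySaturated_typeLE {M : Model} {a : M.U}
    (ha : ∀ I ∈ modalConsequences boxOne x φ, MSat boxOne M I a) :
    ∃ (N : Model) (α : ℕ → N.U),
      ModallySaturated boxOne N ∧ Sat N φ α ∧ TypeLE boxOne N M (α x) a := by
  obtain ⟨N, α, hN, hφ, -, hΔ⟩ := exists_modallySaturated_realizes (boxOne := boxOne)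
    (φ := φ) (x := x) (Γ := ∅) (Δ := {I | ¬ MSat boxOne M I a}) fun s => by
      obtain ⟨J, hJ⟩ := exists_mSat_iff_exists_mem (boxOne := boxOne)
        (s.finite_toSet.inter_of_right {I | ¬ MSat boxOne M I a})
      have J_not_consequence : J ∉ modalConsequences boxOne x φ := fun hmem => by
        obtain ⟨K, hK, haK⟩ := (hJ M a).1 (ha J hmem)
        exact hK.1 haK
      simp only [modalConsequences, Entails, Set.mem_ofPred_eq, not_forall, sat_ST_iff_mSat,
        hJ] at J_not_consequence
      obtain ⟨N, α, hφ, hα⟩ := J_not_consequence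
      exact ⟨N, α, hφ, by simp, fun K hK hαK => hα ⟨K, hK, hαK⟩⟩
  exact ⟨N, α, hN, hφ, fun I hI => not_not.1 fun haI => hΔ I haI hI⟩

theorem exists_equiv_ST_of_invariantD1 (hfv : φ.freeVars ⊆ {x})
    (hinv : InvariantD1 boxOne x φ) : ∃ I, Equiv φ (ST boxOne true I x) := by
  refine exists_equiv_ST_of_forall_modallySaturated fun M β hM hβ => ?_
  obtain ⟨N, α, hN, hφ, hαβ⟩ := exists_modallySaturated_typeLE hβ
  have asim : IsAsimD1 boxOne Set.univ N M (α x) (β x) (TypeLE boxOne N M) (TypeLE boxOne M N) :=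
    isAsimD1_iff.2 ⟨hαβ, hN.isDirectedAsim_typeLE hM, hM.isDirectedAsim_typeLE hN⟩
  rw [← satAt_iff_sat hfv] at hφ ⊢
  exact hinv Set.univ (Set.subset_univ _) N M _ _ _ _ asim _ _ hαβ hφ

end Characterization

theorem statement_5_general (boxOne : Bool) (x : ℕ) (φ : FOForm) (hfv : φ.freeVars ⊆ {x}) :
    (∃ I : MForm, Equiv φ (ST boxOne true I x)) ↔ InvariantD1 boxOne x φ :=
  ⟨fun ⟨_, hI⟩ => invariantD1_of_equiv_ST hI, exists_equiv_ST_of_invariantD1 hfv⟩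

/-- **Theorem 2, case (i,j) = (2,1).**  φ(x) is logically equivalent to the
(2,1)-standard x-translation of a modal intuitionistic formula iff φ(x) is
invariant with respect to (2,1)-modal asimulations. -/
theorem statement_5 (x : ℕ) (φ : FOForm) (hfv : φ.freeVars ⊆ {x}) :
    (∃ I : MForm, Equiv φ (ST false true I x)) ↔ InvariantD1 false x φ :=
  statement_5_general false x φ hfv

end ModalIntAsim
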